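/- For every k ∈ {1,…,n} and every J ∈ S_{A_n}, one has f_k(m_{J_{η_k}}) ≤ f_k(m_J); that is, J_{η_k} realizes the minimum of f_k(m_J) over all J ∈ S_{A_n}. -/

import Mathlib

open Finset

/-- `Λ_{2,n}`: pairs `α ∈ ℕ²` with `1 ≤ α₁ + α₂ ≤ n`. -/
def Lam2 (n : ℕ) : Finset (ℕ × ℕ) :=
  ((range (n+1)) ×ˢ (range (n+1))).filter (fun α => 1 ≤ α.1 + α.2 ∧ α.1 + α.2 ≤ n)

/-- `v̄ ∈ ℂ^{Λ_{2,n}}`, with `α`-coordinate `C(v₁,α₁)·C(v₂,α₂)`. -/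
noncomputable def vbar (n : ℕ) (v : ℕ × ℕ) : (Lam2 n) → ℂ :=
  fun α => ((v.1.choose α.1.1 * v.2.choose α.1.2 : ℕ) : ℂ)

/-- `Λ_{3,n}`: triples `β ∈ ℕ³` with `1 ≤ β₁ + β₂ + β₃ ≤ n`. -/
def Lam3 (n : ℕ) : Finset (ℕ × ℕ × ℕ) :=
  ((range (n+1)) ×ˢ (range (n+1)) ×ˢ (range (n+1))).filter
    (fun β => 1 ≤ β.1 + β.2.1 + β.2.2 ∧ β.1 + β.2.1 + β.2.2 ≤ n)

/-- The linear map `A_n : ℕ³ → ℕ²` with matrix rows `(1,1,n)` and `(0,1,n+1)`. -/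
def Amap (n : ℕ) (β : ℕ × ℕ × ℕ) : ℕ × ℕ :=
  (β.1 + β.2.1 + n * β.2.2, β.2.1 + (n+1) * β.2.2)

/-- `c_β = Σ_{γ ≤ β} (−1)^{|β−γ|} C(β,γ) (A_nγ)‾`. -/
noncomputable def cvec (n : ℕ) (β : ℕ × ℕ × ℕ) : (Lam2 n) → ℂ :=
  ∑ γ ∈ (range (β.1+1)) ×ˢ (range (β.2.1+1)) ×ˢ (range (β.2.2+1)),
    (((-1 : ℂ) ^ ((β.1 + β.2.1 + β.2.2) - (γ.1 + γ.2.1 + γ.2.2))) *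
      ((β.1.choose γ.1 * β.2.1.choose γ.2.1 * β.2.2.choose γ.2.2 : ℕ) : ℂ)) •
      vbar n (Amap n γ)

/-- `J ∈ S_{A_n}`: `J ⊆ Λ_{3,n}`, `|J| = λ_{2,n}`, `det L^c_J ≠ 0`. -/
def memSA (n : ℕ) (J : Finset (ℕ × ℕ × ℕ)) : Prop :=
  J ⊆ Lam3 n ∧ J.card = (Lam2 n).card ∧
    ∀ e : (Lam2 n) ≃ J,
      (Matrix.of fun i j : (Lam2 n) => cvec n (e i).1 j).det ≠ 0

/-- `m_J = Σ_{β ∈ J} A_nβ`. -/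
def mJ (n : ℕ) (J : Finset (ℕ × ℕ × ℕ)) : ℕ × ℕ := ∑ β ∈ J, Amap n β

/-- `f_k(v) = k·v₁ + (1−k)·v₂`. -/
def fk (k : ℕ) (v : ℕ × ℕ) : ℤ := (k : ℤ) * v.1 + (1 - (k : ℤ)) * v.2

/-- Data of a sequence `η = (z, d₀, d₁, …, d_r)`. -/
structure OmegaData where
  r : ℕ
  z : Bool
  d : ℕ → ℕ

/-- `η ∈ Ω`: `d₀ = 0`, `d_i ≥ 1` for `1 ≤ i ≤ r` (and `d_i = 0` beyond `r`),
and `d₀ + ⋯ + d_r = n`. -/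
def OmegaData.IsOmega (n : ℕ) (η : OmegaData) : Prop :=
  η.d 0 = 0 ∧ (∀ i, 1 ≤ i → i ≤ η.r → 1 ≤ η.d i) ∧
  (∀ i, η.r < i → η.d i = 0) ∧
  (∑ i ∈ range (η.r + 1), η.d i) = n

/-- The unique `t` with `Σ_{i=0}^{t−1} d_i < j ≤ Σ_{i=0}^{t} d_i`. -/
noncomputable def tIdx (η : OmegaData) (j : ℕ) : ℕ :=
  sInf {t | j ≤ ∑ i ∈ range (t+1), η.d i}

/-- The vector `v_{j,η} ∈ ℕ²`. -/
noncomputable def vvec (η : OmegaData) (j : ℕ) : ℕ × ℕ :=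
  let t := tIdx η j
  let c := j - ∑ i ∈ range t, η.d i
  let a := (∑ i ∈ range t, if (Odd i ↔ Odd t) then η.d i else 0) + c
  if (η.z = true) ↔ Odd t then (a, 0) else (0, a)

/-- `T_{j,η}` for `1 ≤ j ≤ n`, and `T_{0,η} = {(1,1),…,(n,n)}`. -/
noncomputable def Tj (n : ℕ) (η : OmegaData) (j : ℕ) : Finset (ℕ × ℕ) :=
  if j = 0 then (range n).image (fun q => (q+1, q+1))
  else (range (n - j + 1)).image (fun p => vvec η j + (p, p))

/-- `T_η = ⋃_{j=0}^{n} T_{j,η}`. -/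
noncomputable def Tset (n : ℕ) (η : OmegaData) : Finset (ℕ × ℕ) :=
  (range (n+1)).biUnion (fun j => Tj n η j)

/-- `r_{i,η} = n·π₂(v_{i,η})`. -/
noncomputable def rshift (n : ℕ) (η : OmegaData) (i : ℕ) : ℕ := n * (vvec η i).2

/-- `T'_η = T_{0,η} ∪ ⋃_{i=1}^{n} (T_{i,η} + r_{i,η})`. -/
noncomputable def Tset' (n : ℕ) (η : OmegaData) : Finset (ℕ × ℕ) :=
  Tj n η 0 ∪ (Finset.Icc 1 n).biUnion
    (fun i => (Tj n η i).image (fun v => v + (rshift n η i, rshift n η i)))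

/-- `J_η`: the (unique) subset of `Λ_{3,n}` with `A_n(J_η) = T'_η`. -/
noncomputable def Jset (n : ℕ) (η : OmegaData) : Finset (ℕ × ℕ × ℕ) :=
  (Lam3 n).filter (fun β => Amap n β ∈ Tset' n η)

/-- `z_k = 1` iff `f_k((1,0)) ≤ f_k((n,n+1))`. -/
def zk (n k : ℕ) : Bool := decide (fk k (1, 0) ≤ fk k (n, n+1))

/-- `t_l` in the recursive definition of `η_k`, where `O`, `E` are the odd- and
even-indexed partial sums `Σ_{j<l, j odd} d_{k,j}` and `Σ_{j<l, j even} d_{k,j}`. -/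
noncomputable def tval (n k : ℕ) (l O E : ℕ) : ℕ :=
  let w := (if Odd l then E else O) + 1
  if ((zk n k = true) ↔ Odd l) then
    sSup {m : ℕ | (m : ℤ) * fk k (1, 0) ≤ fk k (w * n, w * (n+1))}
  else
    sSup {m : ℕ | (m : ℤ) * fk k (n, n+1) ≤ fk k (w, 0)}

/-- The pair `(Σ_{j≤l, j odd} d_{k,j}, Σ_{j≤l, j even} d_{k,j})` of the recursion
defining `η_k`. -/
noncomputable def oeSums (n k : ℕ) : ℕ → ℕ × ℕ
  | 0 => (0, 0)
  | l + 1 =>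
    let p := oeSums n k l
    let O := p.1
    let E := p.2
    let S := O + E
    let dnext := if S < n then
        min (n - S) (tval n k (l+1) O E - (if Odd (l+1) then O else E))
      else 0
    if Odd (l+1) then (O + dnext, E) else (O, E + dnext)

/-- `d_{k,l}`. -/
noncomputable def dk (n k : ℕ) : ℕ → ℕ
  | 0 => 0
  | l + 1 =>
    let p := oeSums n k l
    let O := p.1
    let E := p.2
    let S := O + E
    if S < n then
      min (n - S) (tval n k (l+1) O E - (if Odd (l+1) then O else E))
    else 0

/-- `η_k = (z_k, d_{k,0}, …, d_{k,r})`, where `r` is the first index with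
`Σ_{j=0}^{r} d_{k,j} = n`. -/
noncomputable def etak (n k : ℕ) : OmegaData :=
  { r := sInf {r | ∑ j ∈ range (r+1), dk n k j = n},
    z := zk n k,
    d := dk n k }

/-!
The value `f_k (A_n β)` is the weight `k * β₁ + β₂ + K * β₃` of `β`, where `K = n + 1 - k`, and
`c_β` is the jet of order `n` at the origin of `u ^ β₁ * w ^ β₂ * g ^ β₃`, where `u = X 0`,
`1 + w = (1 + u) * (1 + X 1)` and `1 + g = (1 + u) ^ n * (1 + X 1) ^ (n + 1)`, so that
`(1 + u) * (1 + g) = (1 + w) ^ (n + 1)`.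

List the powers of `u` and of `g` by non-decreasing weight. The jets of the products of the `j`-th
listed power with `w ^ p`, for `1 ≤ j + p ≤ n`, have the property that every `c_β` is a combination
of those of weight at most that of `β`: the relation above removes mixed products of `u` and `g`
without raising the weight, and it also reduces products with `j + p > n`, because weights in the
listing grow fast enough as long as `j ≤ k + K = n + 1`. As there are as many of these products as
elements in any `J` in `S_{A_n}`, they minimise the total weight by an exchange argument. The
recursion for `η_k` produces exactly such a listing, and `J_{η_k}` consists of its multi-indices.
-/

/-! ### Exchange -/

lemma sum_eq_sum_card_filter_lt {ι : Type*} (s : Finset ι) (f : ι → ℕ) {M : ℕ}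
    (hf : ∀ x ∈ s, f x ≤ M) : ∑ x ∈ s, f x = ∑ W ∈ range M, #{x ∈ s | W < f x} := by
  simp only [card_filter]
  rw [sum_comm]
  refine sum_congr rfl fun x hx => ?_
  rw [← card_filter, show {W ∈ range M | W < f x} = range (f x) by grind, card_range]

lemma sum_le_sum_of_card_filter_le {ι κ : Type*} {s : Finset ι} {t : Finset κ} {f : ι → ℕ}
    {g : κ → ℕ} (hcard : #t ≤ #s)
    (h : ∀ W, #{x ∈ s | f x ≤ W} ≤ #{y ∈ t | g y ≤ W}) :
    ∑ y ∈ t, g y ≤ ∑ x ∈ s, f x := by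
  obtain ⟨M, hM⟩ : ∃ M, M = ∑ x ∈ s, f x + ∑ y ∈ t, g y := ⟨_, rfl⟩
  have bound_f : ∀ x ∈ s, f x ≤ M := fun x hx => hM ▸
    (single_le_sum_of_canonicallyOrdered (f := f) hx).trans (Nat.le_add_right _ _)
  have bound_g : ∀ y ∈ t, g y ≤ M := fun y hy => hM ▸
    (single_le_sum_of_canonicallyOrdered (f := g) hy).trans (Nat.le_add_left _ _)
  rw [sum_eq_sum_card_filter_lt t g bound_g, sum_eq_sum_card_filter_lt s f bound_f]
  refine sum_le_sum fun W _ => ?_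
  have hs := card_filter_add_card_filter_not (s := s) (fun x => f x ≤ W)
  have ht := card_filter_add_card_filter_not (s := t) (fun y => g y ≤ W)
  simp only [not_le] at hs ht
  have := h W
  omega

/-- The exchange argument behind the optimality of greedy bases. -/
theorem sum_le_sum_of_linearIndepOn_of_mem_span {ι κ F V : Type*} [Ring F]
    [StrongRankCondition F] [AddCommGroup V] [Module F V] {s : Finset ι} {t : Finset κ}
    {f : ι → ℕ} {g : κ → ℕ} {v : ι → V} {w : κ → V} (hcard : #t ≤ #s)
    (hv : LinearIndepOn F v s)
    (hspan : ∀ x ∈ s, v x ∈ Submodule.span F (w '' {y | y ∈ t ∧ g y ≤ f x})) :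
    ∑ y ∈ t, g y ≤ ∑ x ∈ s, f x := by
  classical
  refine sum_le_sum_of_card_filter_le hcard fun W => ?_
  have hvW : LinearIndepOn F v ({x ∈ s | f x ≤ W} : Finset ι) :=
    hv.mono (coe_subset.2 (filter_subset _ _))
  have hrange : Set.range (fun x : ({x ∈ s | f x ≤ W} : Finset ι) => v x) ≤
      Submodule.span F (({y ∈ t | g y ≤ W}.image w : Finset V) : Set V) := by
    rintro _ ⟨⟨x, hx⟩, rfl⟩
    obtain ⟨hxs, hxW⟩ := mem_filter.1 hx
    refine Submodule.span_mono ?_ (hspan x hxs)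
    rw [coe_image]
    exact Set.image_mono fun y hy => by simpa using ⟨hy.1, hy.2.trans hxW⟩
  have hle := linearIndependent_le_span' _ hvW _ hrange
  simp only [Cardinal.mk_fintype, Nat.cast_le, Fintype.card_coe, SetLike.coe_sort_coe] at hle
  exact hle.trans card_image_le

/-! ### Merging the multiples of two weights -/

/-- A listing, in non-decreasing order, of the multiples `k, 2k, …` and `K, 2K, …` of two weights,
ties being broken arbitrarily: after `j` steps `a j` multiples of `k` and `b j` multiples of `K`
have been listed. -/
structure MergePath (k K : ℕ) where
  a : ℕ → ℕ
  b : ℕ → ℕ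
  a_zero : a 0 = 0
  b_zero : b 0 = 0
  succ : ∀ j, (a (j + 1) = a j + 1 ∧ b (j + 1) = b j ∧ k * (a j + 1) ≤ K * (b j + 1)) ∨
    (a (j + 1) = a j ∧ b (j + 1) = b j + 1 ∧ K * (b j + 1) ≤ k * (a j + 1))

namespace MergePath

variable {k K : ℕ} (P : MergePath k K)

/-- The same listing with the roles of the two weights exchanged. -/
@[simps]
def swap : MergePath K k where
  a := P.b
  b := P.a
  a_zero := P.b_zero
  b_zero := P.a_zero
  succ j := (P.succ j).symm.imp (by tauto) (by tauto)

/-- The coefficient of `k` in the `j`-th entry of the listing, or `0` if that entry is a multiple of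
`K` or `j = 0`. -/
def x : ℕ → ℕ
  | 0 => 0
  | j + 1 => if P.a (j + 1) = P.a j then 0 else P.a (j + 1)

/-- The coefficient of `K` in the `j`-th entry of the listing, or `0` if that entry is a multiple of
`k` or `j = 0`. -/
def y (j : ℕ) : ℕ := P.swap.x j

lemma x_zero : P.x 0 = 0 := rfl

lemma y_zero : P.y 0 = 0 := rfl

lemma step (j : ℕ) :
    (P.a (j + 1) = P.a j + 1 ∧ P.b (j + 1) = P.b j ∧ P.x (j + 1) = P.a j + 1 ∧ P.y (j + 1) = 0 ∧
      k * (P.a j + 1) ≤ K * (P.b j + 1)) ∨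
    (P.a (j + 1) = P.a j ∧ P.b (j + 1) = P.b j + 1 ∧ P.x (j + 1) = 0 ∧ P.y (j + 1) = P.b j + 1 ∧
      K * (P.b j + 1) ≤ k * (P.a j + 1)) := by
  rcases P.succ j with ⟨ha, hb, h⟩ | ⟨ha, hb, h⟩ <;> simp [x, y, ha, hb, h]

/-- The value of the `j`-th entry of the listing. -/
def weight (j : ℕ) : ℕ := k * P.x j + K * P.y j

lemma a_add_b (j : ℕ) : P.a j + P.b j = j := by
  induction j with
  | zero => simp [P.a_zero, P.b_zero]
  | succ j ih => rcases P.step j with h | h <;> omega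

lemma x_le_a (j : ℕ) : P.x j ≤ P.a j := by
  cases j with
  | zero => simp [P.x_zero]
  | succ j => rcases P.step j with h | h <;> omega

lemma y_le_b (j : ℕ) : P.y j ≤ P.b j := P.swap.x_le_a j

lemma mul_b_le (j : ℕ) : K * P.b j ≤ k * (P.a j + 1) := by
  induction j with
  | zero => simp [P.b_zero]
  | succ j ih =>
    rcases P.step j with ⟨ha, hb, -, -, -⟩ | ⟨ha, hb, -, -, hle⟩
    · rw [ha, hb]
      exact ih.trans (Nat.mul_le_mul_left _ (by omega))
    · rwa [ha, hb]

lemma exists_le_a (hK : 0 < K) (x : ℕ) : ∃ j, x ≤ P.a j := by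
  by_contra! hlt
  set j := x + k * (x + 1)
  have hb : k * (x + 1) < P.b j := by
    have := P.a_add_b j
    have := hlt j
    omega
  have : P.b j ≤ k * (x + 1) := calc
    P.b j ≤ K * P.b j := Nat.le_mul_of_pos_left _ hK
    _ ≤ k * (P.a j + 1) := P.mul_b_le j
    _ ≤ k * (x + 1) := Nat.mul_le_mul_left _ (by have := hlt j; omega)
  omega

lemma exists_entry_left (hK : 0 < K) (x : ℕ) : ∃ j, P.x j = x ∧ P.y j = 0 := by
  classical
  have hex := P.exists_le_a hK x
  obtain ⟨j, hj, hmin⟩ : ∃ j, x ≤ P.a j ∧ ∀ i < j, P.a i < x :=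
    ⟨Nat.find hex, Nat.find_spec hex, fun i hi => not_le.1 (Nat.find_min hex hi)⟩
  refine ⟨j, ?_⟩
  rcases j with _ | i
  · rw [P.a_zero, Nat.le_zero] at hj
    exact ⟨P.x_zero.trans hj.symm, P.y_zero⟩
  · have := hmin i i.lt_succ_self
    rcases P.step i with h | h <;> omega

lemma exists_entry_right (hk : 0 < k) (y : ℕ) : ∃ j, P.x j = 0 ∧ P.y j = y :=
  (P.swap.exists_entry_left hk y).imp fun _ h => h.symm

lemma weight_zero : P.weight 0 = 0 := by simp [weight, P.x_zero, P.y_zero]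

lemma weight_succ (j : ℕ) :
    P.weight (j + 1) = min (k * (P.a j + 1)) (K * (P.b j + 1)) := by
  rcases P.step j with ⟨-, -, hx, hy, h⟩ | ⟨-, -, hx, hy, h⟩
  · rw [min_eq_left h, weight, hx, hy, mul_zero, add_zero]
  · rw [min_eq_right h, weight, hx, hy, mul_zero, zero_add]

lemma a_le_a_succ (j : ℕ) : P.a j ≤ P.a (j + 1) := by
  rcases P.step j with h | h <;> omega

lemma b_le_b_succ (j : ℕ) : P.b j ≤ P.b (j + 1) := P.swap.a_le_a_succ j

lemma weight_mono : Monotone P.weight := by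
  refine monotone_nat_of_le_succ fun j => ?_
  rcases j with _ | j
  · simp [weight_zero]
  · rw [weight_succ, weight_succ]
    exact min_le_min (Nat.mul_le_mul_left _ (Nat.succ_le_succ (P.a_le_a_succ j)))
      (Nat.mul_le_mul_left _ (Nat.succ_le_succ (P.b_le_b_succ j)))

lemma weight_succ_pos (hk : 0 < k) (hK : 0 < K) (j : ℕ) : 0 < P.weight (j + 1) := by
  rw [weight_succ]
  positivity

lemma mul_a_eq_mul_b_of_weight_eq (hk : 0 < k) (hK : 0 < K) {j : ℕ}
    (h : P.weight (j + 1) = P.weight j) : k * P.a (j + 1) = K * P.b (j + 1) := by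
  rcases j with _ | j
  · exact absurd (h.trans P.weight_zero) (P.weight_succ_pos hk hK 0).ne'
  · rw [weight, weight] at h
    rcases P.step j with ⟨ha, hb, hx, hy, -⟩ | ⟨ha, hb, hx, hy, -⟩ <;>
    rcases P.step (j + 1) with ⟨ha', hb', hx', hy', -⟩ | ⟨ha', hb', hx', hy', -⟩ <;>
    simp only [ha, hb, hx, hy, ha', hb', hx', hy'] at h ⊢ <;> nlinarith

lemma weight_lt_weight_succ (hkK : k.Coprime K) (hk : 0 < k) (hK : 0 < K) {j : ℕ}
    (hj : j + 1 < k + K) : P.weight j < P.weight (j + 1) := by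
  refine lt_of_le_of_ne (P.weight_mono j.le_succ) fun h => ?_
  have heq := P.mul_a_eq_mul_b_of_weight_eq hk hK h.symm
  have hsum := P.a_add_b (j + 1)
  obtain ⟨c, hc⟩ : K ∣ P.a (j + 1) := hkK.symm.dvd_of_dvd_mul_left ⟨_, heq⟩
  have hb : P.b (j + 1) = k * c :=
    Nat.eq_of_mul_eq_mul_left hK (by rw [← heq, hc]; ring)
  rcases Nat.eq_zero_or_pos c with rfl | hc0
  · omega
  · nlinarith

lemma weight_lt_weight_add_two (hk : 0 < k) (hK : 0 < K) (j : ℕ) :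
    P.weight j < P.weight (j + 2) := by
  refine (P.weight_mono (by omega)).lt_of_ne fun h => ?_
  have h₁ := P.weight_mono (show j ≤ j + 1 by omega)
  have h₂ := P.weight_mono (show j + 1 ≤ j + 1 + 1 by omega)
  have e₁ := P.mul_a_eq_mul_b_of_weight_eq hk hK (j := j) (by grind)
  have e₂ := P.mul_a_eq_mul_b_of_weight_eq hk hK (j := j + 1) (by grind)
  rcases P.step (j + 1) with ⟨ha, hb, -⟩ | ⟨ha, hb, -⟩ <;> rw [ha, hb] at e₂ <;> nlinarith

lemma dvd_weight {g : ℕ} (hk : g ∣ k) (hK : g ∣ K) (j : ℕ) : g ∣ P.weight j :=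
  dvd_add (hk.mul_right _) (hK.mul_right _)

lemma weight_add_two_le (hkK : ¬ k.Coprime K) (hk : 0 < k) (hK : 0 < K) (j : ℕ) :
    P.weight j + 2 ≤ P.weight (j + 2) := by
  have hg : 2 ≤ k.gcd K := by
    have := Nat.gcd_pos_of_pos_left K hk
    rw [Nat.coprime_iff_gcd_eq_one] at hkK
    omega
  have hdvd : ∀ i, k.gcd K ∣ P.weight i := P.dvd_weight (k.gcd_dvd_left K) (k.gcd_dvd_right K)
  have hlt := P.weight_lt_weight_add_two hk hK j
  have := Nat.le_of_dvd (by omega) (Nat.dvd_sub (hdvd (j + 2)) (hdvd j))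
  omega

/- For coprime weights the first tie is `k * K`, listed at positions `k + K - 1` and `k + K`;
otherwise all weights are multiples of a common divisor `≥ 2`, and no weight occurs three times. -/
lemma weight_add_le (hk : 0 < k) (hK : 0 < K) {j m : ℕ} (hjm : j + m ≤ k + K) :
    P.weight j + m ≤ P.weight (j + m) + 1 := by
  by_cases hkK : k.Coprime K
  · have hstrict : ∀ m, j + m < k + K → P.weight j + m ≤ P.weight (j + m) := by
      intro m hm
      induction m with
      | zero => rfl
      | succ m ih =>
        have := ih (by omega)
        have := P.weight_lt_weight_succ hkK hk hK (j := j + m) hm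
        rw [← add_assoc j]
        omega
    rcases m with _ | m
    · exact Nat.le_succ _
    · have := hstrict m (by omega)
      have := P.weight_mono (show j + m ≤ j + (m + 1) by omega)
      omega
  · clear hjm
    induction m using Nat.twoStepInduction with
    | zero => exact Nat.le_succ _
    | one =>
      have := P.weight_mono (show j ≤ j + 1 by omega)
      omega
    | more m ih _ =>
      have := P.weight_add_two_le hkK hk hK (j + m)
      rw [add_assoc] at this
      omega

lemma add_weight_le_add_weight (hk : 0 < k) (hK : 0 < K) {i j p q : ℕ} (hji : j < i)
    (hp : k + K ≤ p + i) (hq : q + j < k + K) : q + P.weight j ≤ p + P.weight i := by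
  obtain ⟨m, hm⟩ : ∃ m, min i (k + K) = j + m := Nat.exists_eq_add_of_le (by omega)
  have h₁ := P.weight_add_le hk hK (j := j) (m := m) (by omega)
  have h₂ := P.weight_mono (show j + m ≤ i by omega)
  omega

end MergePath

/-! ### Reduction of monomials -/

/-- The vectors `m x y q` satisfy the relations of the monomials `u ^ x * g ^ y * w ^ q` in
commuting elements with `(1 + u) * (1 + g) = 1 + ∑ i ≤ n, c i * w ^ (i + 1)`, truncated above total
degree `n`. -/
structure IsMonomialSystem {F V : Type*} [Ring F] [AddCommGroup V] [Module F V] (n : ℕ)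
    (c : ℕ → F) (m : ℕ → ℕ → ℕ → V) : Prop where
  rel : ∀ x y q, m (x + 1) (y + 1) q =
    -m (x + 1) y q - m x (y + 1) q + ∑ i ∈ range (n + 1), c i • m x y (q + i + 1)
  eq_zero : ∀ {x y q}, n < x + y + q → m x y q = 0

namespace IsMonomialSystem

variable {F V : Type*} [Ring F] [AddCommGroup V] [Module F V] {n : ℕ} {c : ℕ → F}
  {m : ℕ → ℕ → ℕ → V} (hm : IsMonomialSystem n c m)

include hm

lemma swap : IsMonomialSystem n c fun x y q => m y x q where
  rel x y q := by rw [hm.rel, sub_eq_add_neg, sub_eq_add_neg, add_comm (-_)]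
  eq_zero h := hm.eq_zero (by omega)

variable {S : Submodule F V} {a b q : ℕ}

lemma succ_left_mem_iff (hS : ∀ x ≤ a, ∀ y ≤ b, ∀ q' ≥ q, m x y q' ∈ S) {y : ℕ} (hy : y ≤ b) :
    m (a + 1) y q ∈ S ↔ m (a + 1) 0 q ∈ S := by
  induction y with
  | zero => rfl
  | succ y ih =>
    have hsum : ∑ i ∈ range (n + 1), c i • m a y (q + i + 1) ∈ S :=
      S.sum_mem fun i _ => S.smul_mem _ (hS a le_rfl y (by omega) _ (by omega))
    rw [← ih (by omega), hm.rel, S.add_mem_iff_left hsum, sub_eq_add_neg,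
      S.add_mem_iff_left (S.neg_mem (hS a le_rfl _ hy q le_rfl)), S.neg_mem_iff]

/- When the new column reaches beyond total degree `n`, its top vector vanishes, and the relation
carries membership from there down to the pure power. -/
lemma succ_left_mem (hS : ∀ x ≤ a, ∀ y ≤ b, ∀ q' ≥ q, m x y q' ∈ S)
    (hpure : a + 1 + b + q ≤ n → m (a + 1) 0 q ∈ S) {y : ℕ} (hy : y ≤ b) :
    m (a + 1) y q ∈ S := by
  rw [hm.succ_left_mem_iff hS hy]
  rcases le_or_gt (a + 1 + b + q) n with h | h
  · exact hpure h
  · rw [← hm.succ_left_mem_iff hS le_rfl, hm.eq_zero h]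
    exact S.zero_mem

variable {k K : ℕ} (P : MergePath k K)

lemma box_mem {i : ℕ}
    (hS : ∀ j ≤ i, ∀ q' ≥ q, q' + j ≤ n → m (P.x j) (P.y j) q' ∈ S) {x y : ℕ}
    (hx : x ≤ P.a i) (hy : y ≤ P.b i) : m x y q ∈ S := by
  induction i generalizing q x y with
  | zero =>
    rw [P.a_zero] at hx
    rw [P.b_zero] at hy
    obtain ⟨rfl, rfl⟩ : x = 0 ∧ y = 0 := by omega
    rcases le_or_gt q n with h | h
    · simpa only [P.x_zero, P.y_zero] using hS 0 le_rfl q le_rfl h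
    · rw [hm.eq_zero (by omega)]
      exact S.zero_mem
  | succ i ih =>
    have hbox : ∀ x ≤ P.a i, ∀ y ≤ P.b i, ∀ q' ≥ q, m x y q' ∈ S := fun x hx y hy q' hq' =>
      ih (fun j hj q'' hq'' => hS j (by omega) q'' (by omega)) hx hy
    have hnew := hS (i + 1) le_rfl q le_rfl
    have hsum := P.a_add_b i
    rcases P.step i with ⟨ha, hb, hx', hy', -⟩ | ⟨ha, hb, hx', hy', -⟩
    · rw [hb] at hy
      rcases (ha ▸ hx).lt_or_eq with hlt | rfl
      · exact hbox x (by omega) y hy q le_rfl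
      · rw [hx', hy'] at hnew
        exact hm.succ_left_mem hbox (fun h => hnew (by omega)) hy
    · rw [ha] at hx
      rcases (hb ▸ hy).lt_or_eq with hlt | rfl
      · exact hbox x hx y (by omega) q le_rfl
      · rw [hx', hy'] at hnew
        exact hm.swap.succ_left_mem (fun y hy x hx => hbox x hx y hy)
          (fun h => hnew (by omega)) hx

lemma entry_mem_of_lt {i : ℕ} (hi : n < q + i)
    (hS : ∀ j < i, ∀ q' ≥ q, q' + j ≤ n → m (P.x j) (P.y j) q' ∈ S) :
    m (P.x i) (P.y i) q ∈ S :=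
  hm.box_mem P (fun j _ q' hq' hj => hS j (by omega) q' hq' hj) (P.x_le_a i) (P.y_le_b i)

variable (hk : 0 < k) (hK : 0 < K) (hkK : k + K = n + 1) {W : ℕ}
  (hS : ∀ j p, p + j ≤ n → p + P.weight j ≤ W → m (P.x j) (P.y j) p ∈ S)

include hk hK hkK hS

lemma entry_mem_of_weight_le {i p : ℕ} (hW : p + P.weight i ≤ W) :
    m (P.x i) (P.y i) p ∈ S := by
  rcases le_or_gt (p + i) n with h | h
  · exact hS i p h hW
  · exact hm.entry_mem_of_lt P h fun j hj q _ hq =>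
      hS j q hq ((P.add_weight_le_add_weight hk hK hj (by omega) (by omega)).trans hW)

theorem mem_of_weight_le {x y p : ℕ} (hW : k * x + p + K * y ≤ W) : m x y p ∈ S := by
  induction hs : x + y using Nat.strong_induction_on generalizing x y p with | _ s ih
  rcases x with _ | x
  · obtain ⟨j, hx, hy⟩ := P.exists_entry_right hk y
    rw [← hx, ← hy] at hW ⊢
    exact hm.entry_mem_of_weight_le P hk hK hkK hS (by rw [MergePath.weight]; omega)
  rcases y with _ | y
  · obtain ⟨j, hx, hy⟩ := P.exists_entry_left hK (x + 1)
    rw [← hx, ← hy] at hW ⊢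
    exact hm.entry_mem_of_weight_le P hk hK hkK hS (by rw [MergePath.weight]; omega)
  rw [mul_add, mul_add] at hW
  rw [hm.rel]
  refine S.add_mem (S.sub_mem (S.neg_mem ?_) ?_) (S.sum_mem fun i hi => S.smul_mem _ ?_)
  · exact ih (x + 1 + y) (by omega) (by rw [mul_add]; omega) rfl
  · exact ih (x + (y + 1)) (by omega) (by rw [mul_add]; omega) rfl
  · have := mem_range.1 hi
    exact ih (x + y) (by omega) (by omega) rfl

end IsMonomialSystem

/-! ### The vectors `c_β` as jets -/

lemma sub_one_pow_eq_sum {R : Type*} [CommRing R] [Algebra ℂ R] (f : R) (m : ℕ) :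
    (f - 1) ^ m = ∑ i ∈ range (m + 1), ((-1 : ℂ) ^ (m - i) * (m.choose i : ℂ)) • f ^ i := by
  rw [sub_eq_add_neg, add_pow]
  refine sum_congr rfl fun i _ => ?_
  simp only [Algebra.smul_def, map_mul, map_pow, map_neg, map_one, map_natCast]
  ring

lemma sub_one_pow_mul_eq_sum {R : Type*} [CommRing R] [Algebra ℂ R] (f₁ f₂ f₃ : R)
    (b₁ b₂ b₃ : ℕ) : (f₁ - 1) ^ b₁ * ((f₂ - 1) ^ b₂ * (f₃ - 1) ^ b₃) =
      ∑ γ ∈ range (b₁ + 1) ×ˢ range (b₂ + 1) ×ˢ range (b₃ + 1),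
        ((-1 : ℂ) ^ (b₁ + b₂ + b₃ - (γ.1 + γ.2.1 + γ.2.2)) *
          ((b₁.choose γ.1 * b₂.choose γ.2.1 * b₃.choose γ.2.2 : ℕ) : ℂ)) •
            (f₁ ^ γ.1 * (f₂ ^ γ.2.1 * f₃ ^ γ.2.2)) := by
  simp only [sub_one_pow_eq_sum, sum_mul_sum, ← sum_product']
  refine sum_congr rfl fun γ hγ => ?_
  simp only [mem_product, mem_range] at hγ
  rw [smul_mul_smul_comm, smul_mul_smul_comm,
    show b₁ + b₂ + b₃ - (γ.1 + γ.2.1 + γ.2.2) = b₁ - γ.1 + (b₂ - γ.2.1 + (b₃ - γ.2.2)) by omega]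
  congr 1
  push_cast
  ring

section Jets

open MvPolynomial

/-- The exponent vector of the monomial `X 0 ^ α.1 * X 1 ^ α.2`. -/
noncomputable def exponent (α : ℕ × ℕ) : Fin 2 →₀ ℕ :=
  Finsupp.single 0 α.1 + Finsupp.single 1 α.2

lemma exponent_injective : Function.Injective exponent := fun α β h =>
  Prod.ext (by simpa [exponent] using DFunLike.congr_fun h 0)
    (by simpa [exponent] using DFunLike.congr_fun h 1)

lemma degree_exponent (α : ℕ × ℕ) : (exponent α).degree = α.1 + α.2 := by
  simp [exponent]

/-- The family of coefficients of a polynomial indexed by `Λ_{2,n}`: its jet of order `n` at the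
origin, without the constant term. -/
noncomputable def jet (n : ℕ) : MvPolynomial (Fin 2) ℂ →ₗ[ℂ] (Lam2 n → ℂ) :=
  LinearMap.pi fun α => lcoeff ℂ (exponent α)

lemma jet_apply (n : ℕ) (p : MvPolynomial (Fin 2) ℂ) (α : Lam2 n) :
    jet n p α = p.coeff (exponent α) := rfl

lemma jet_eq_zero {n : ℕ} {p : MvPolynomial (Fin 2) ℂ}
    (hp : p ∈ idealOfVars (Fin 2) ℂ ^ (n + 1)) : jet n p = 0 := by
  ext α
  have hα := (mem_filter.1 α.2).2
  exact (mem_pow_idealOfVars_iff' _ _).1 hp _ (by rw [degree_exponent]; omega)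

lemma jet_one (n : ℕ) : jet n 1 = 0 := by
  ext α
  have hα := (mem_filter.1 α.2).2
  rw [jet_apply, coeff_one, if_neg fun h => ?_, Pi.zero_apply]
  have := degree_exponent α.1
  rw [← h, map_zero] at this
  omega

lemma jet_one_add_X_pow (n : ℕ) (v : ℕ × ℕ) :
    jet n ((1 + X 0) ^ v.1 * (1 + X 1) ^ v.2) = vbar n v := by
  have expand : (1 + X 0 : MvPolynomial (Fin 2) ℂ) ^ v.1 * (1 + X 1) ^ v.2 =
      ∑ γ ∈ range (v.1 + 1) ×ˢ range (v.2 + 1),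
        monomial (exponent γ) ((v.1.choose γ.1 * v.2.choose γ.2 : ℕ) : ℂ) := by
    simp only [add_comm (1 : MvPolynomial (Fin 2) ℂ), add_pow, sum_mul_sum, ← sum_product']
    refine sum_congr rfl fun γ _ => ?_
    rw [monomial_eq, exponent]
    simp [Finsupp.prod_add_index', pow_add]
    ring
  ext α
  rw [expand, jet_apply, coeff_sum]
  simp only [coeff_monomial, exponent_injective.eq_iff, sum_ite_eq', vbar]
  split_ifs with hα
  · rfl
  · rw [mem_product, mem_range, mem_range, not_and_or, not_lt, not_lt] at hα
    rcases hα with hα | hα <;> simp [Nat.choose_eq_zero_of_lt hα]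

lemma sub_one_mem_idealOfVars {p : MvPolynomial (Fin 2) ℂ} (hp : constantCoeff p = 1) :
    p - 1 ∈ idealOfVars (Fin 2) ℂ := by
  rw [← pow_one (idealOfVars (Fin 2) ℂ), mem_pow_idealOfVars_iff']
  intro d hd
  obtain rfl : d = 0 := (Finsupp.degree_eq_zero_iff d).1 (by omega)
  simpa [sub_eq_zero, constantCoeff_eq] using hp

/-- The element `U ^ n * V ^ (n + 1) - 1`, where `U = 1 + X 0` and `V = 1 + X 1`, which represents
the third column of `A_n`. -/
noncomputable def lastGen (n : ℕ) : MvPolynomial (Fin 2) ℂ :=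
  (1 + X 0) ^ n * (1 + X 1) ^ (n + 1) - 1

/-- The element `U * V - 1`, where `U = 1 + X 0` and `V = 1 + X 1`, which represents the second
column of `A_n`. -/
noncomputable def midGen : MvPolynomial (Fin 2) ℂ := (1 + X 0) * (1 + X 1) - 1

lemma cvec_eq_jet (n x q y : ℕ) :
    cvec n (x, q, y) = jet n (X 0 ^ x * (midGen ^ q * lastGen n ^ y)) := by
  rw [← add_sub_cancel_left (1 : MvPolynomial (Fin 2) ℂ) (X 0), midGen, lastGen,
    sub_one_pow_mul_eq_sum, map_sum, cvec]
  refine sum_congr rfl fun γ _ => ?_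
  rw [map_smul, ← jet_one_add_X_pow, Amap]
  generalize (1 + X 0 : MvPolynomial (Fin 2) ℂ) = U, (1 + X 1 : MvPolynomial (Fin 2) ℂ) = V
  congr 2
  ring

lemma X_mul_lastGen (n : ℕ) : X 0 * lastGen n = -X 0 - lastGen n +
    ∑ i ∈ range (n + 1), ((n + 1).choose (i + 1) : ℂ) • midGen ^ (i + 1) := by
  have hprod : (1 + X 0) * (1 + lastGen n) = (midGen + 1) ^ (n + 1) := by
    rw [lastGen, midGen, sub_add_cancel, mul_pow]
    ring
  rw [add_pow, sum_range_succ'] at hprod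
  simp only [one_pow, mul_one, pow_zero, Nat.choose_zero_right, Nat.cast_one] at hprod
  simp only [Algebra.smul_def, map_natCast, mul_comm (Nat.cast _)]
  linear_combination hprod

theorem cvec_isMonomialSystem (n : ℕ) :
    IsMonomialSystem n (fun i => ((n + 1).choose (i + 1) : ℂ)) fun x y q => cvec n (x, q, y) where
  rel x y q := by
    simp only [cvec_eq_jet, ← map_smul, ← map_neg, ← map_sum, ← map_sub, ← map_add]
    congr 1
    calc X 0 ^ (x + 1) * (midGen ^ q * lastGen n ^ (y + 1))
        = X 0 ^ x * (midGen ^ q * lastGen n ^ y) * (X 0 * lastGen n) := by ring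
      _ = _ := by
        rw [X_mul_lastGen, mul_add, mul_sum]
        refine congrArg₂ _ (by ring) (sum_congr rfl fun i _ => ?_)
        rw [mul_smul_comm]
        congr 1
        ring
  eq_zero {x y q} h := by
    rw [cvec_eq_jet]
    refine jet_eq_zero (Ideal.pow_le_pow_right (show n + 1 ≤ x + (q + y) by omega) ?_)
    have hX : X 0 ∈ idealOfVars (Fin 2) ℂ := Ideal.subset_span ⟨0, rfl⟩
    have hmid : midGen ∈ idealOfVars (Fin 2) ℂ := sub_one_mem_idealOfVars (by simp)
    have hlast : lastGen n ∈ idealOfVars (Fin 2) ℂ := sub_one_mem_idealOfVars (by simp)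
    rw [pow_add, pow_add]
    exact Ideal.mul_mem_mul (Ideal.pow_mem_pow hX x)
      (Ideal.mul_mem_mul (Ideal.pow_mem_pow hmid q) (Ideal.pow_mem_pow hlast y))

lemma cvec_zero (n : ℕ) : cvec n (0, 0, 0) = 0 := by
  simpa only [pow_zero, mul_one, jet_one] using cvec_eq_jet n 0 0 0

end Jets

lemma mem_Lam2 {n : ℕ} {α : ℕ × ℕ} : α ∈ Lam2 n ↔ 1 ≤ α.1 + α.2 ∧ α.1 + α.2 ≤ n := by
  simp only [Lam2, mem_filter, mem_product, mem_range]
  omega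

lemma linearIndepOn_cvec_of_memSA {n : ℕ} {J : Finset (ℕ × ℕ × ℕ)} (hJ : memSA n J) :
    LinearIndepOn ℂ (cvec n) J := by
  have e : Lam2 n ≃ J := Fintype.equivOfCardEq (by simp [hJ.2.1])
  exact (linearIndependent_equiv e).1 (Matrix.linearIndependent_rows_of_det_ne_zero (hJ.2.2 e))

/-- The weight of `β ∈ ℕ³` when the three coordinates have weights `k`, `1` and `K`. -/
def indexWeight (k K : ℕ) (β : ℕ × ℕ × ℕ) : ℕ := k * β.1 + β.2.1 + K * β.2.2

namespace MergePath

variable {k K : ℕ} (P : MergePath k K)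

/-- The multi-index consisting of the `α.1`-th entry of the listing and the exponent `α.2`. -/
def index (α : ℕ × ℕ) : ℕ × ℕ × ℕ := (P.x α.1, α.2, P.y α.1)

lemma indexWeight_index (α : ℕ × ℕ) : indexWeight k K (P.index α) = α.2 + P.weight α.1 := by
  simp only [indexWeight, index, weight]
  omega

theorem cvec_mem_span {n : ℕ} (hk : 0 < k) (hK : 0 < K) (hkK : k + K = n + 1) (β : ℕ × ℕ × ℕ) :
    cvec n β ∈ Submodule.span ℂ ((fun α => cvec n (P.index α)) ''
      {α | α ∈ Lam2 n ∧ indexWeight k K (P.index α) ≤ indexWeight k K β}) := by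
  refine (cvec_isMonomialSystem n).mem_of_weight_le P hk hK hkK (fun j p hpj hW => ?_)
    (le_refl (indexWeight k K β))
  rcases Nat.eq_zero_or_pos (j + p) with h | h
  · obtain ⟨rfl, rfl⟩ : j = 0 ∧ p = 0 := by omega
    rw [P.x_zero, P.y_zero, cvec_zero]
    exact Submodule.zero_mem _
  · exact Submodule.subset_span
      ⟨(j, p), ⟨mem_Lam2.2 ⟨h, by omega⟩, by rwa [P.indexWeight_index]⟩, rfl⟩

theorem sum_indexWeight_le {n : ℕ} (hk : 0 < k) (hK : 0 < K) (hkK : k + K = n + 1)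
    {J : Finset (ℕ × ℕ × ℕ)} (hJ : memSA n J) :
    ∑ α ∈ Lam2 n, indexWeight k K (P.index α) ≤ ∑ β ∈ J, indexWeight k K β :=
  sum_le_sum_of_linearIndepOn_of_mem_span hJ.2.1.ge (linearIndepOn_cvec_of_memSA hJ)
    fun β _ => P.cvec_mem_span hk hK hkK β

end MergePath

/-! ### The blocks of a sequence in `Ω` -/

/-- The sum of the `d i` over the indices `i < t` of the same parity as `t`. -/
def sameParitySum (d : ℕ → ℕ) (t : ℕ) : ℕ :=
  ∑ i ∈ range t, if (Odd i ↔ Odd t) then d i else 0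

/-- The sum of the `d i` over the indices `i < t` of the other parity than `t`. -/
def otherParitySum (d : ℕ → ℕ) (t : ℕ) : ℕ :=
  ∑ i ∈ range t, if (Odd i ↔ Odd t) then 0 else d i

lemma sameParitySum_add_otherParitySum (d : ℕ → ℕ) (t : ℕ) :
    sameParitySum d t + otherParitySum d t = ∑ i ∈ range t, d i := by
  rw [sameParitySum, otherParitySum, ← sum_add_distrib]
  exact sum_congr rfl fun i _ => by split_ifs <;> simp

lemma odd_iff_odd_add_one (i t : ℕ) : (Odd i ↔ Odd (t + 1)) ↔ ¬(Odd i ↔ Odd t) := by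
  rw [Nat.odd_add_one]
  tauto

lemma sameParitySum_succ (d : ℕ → ℕ) (t : ℕ) :
    sameParitySum d (t + 1) = otherParitySum d t := by
  simp [sameParitySum, otherParitySum, sum_range_succ, odd_iff_odd_add_one]

lemma otherParitySum_succ (d : ℕ → ℕ) (t : ℕ) :
    otherParitySum d (t + 1) = sameParitySum d t + d t := by
  simp [sameParitySum, otherParitySum, sum_range_succ, odd_iff_odd_add_one]

section Blocks

variable (η : OmegaData)

/-- The number of indices `1, …, j` lying in blocks of `η` whose number has the parity of `t`. -/
noncomputable def blockCount (t j : ℕ) : ℕ := #{i ∈ range j | Odd (tIdx η (i + 1)) ↔ Odd t}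

lemma blockCount_zero (t : ℕ) : blockCount η t 0 = 0 := rfl

lemma blockCount_congr {t s : ℕ} (h : Odd t ↔ Odd s) : blockCount η t = blockCount η s := by
  funext j
  simp only [blockCount, h]

lemma blockCount_succ (t j : ℕ) : blockCount η t (j + 1) =
    blockCount η t j + if (Odd (tIdx η (j + 1)) ↔ Odd t) then 1 else 0 := by
  rw [blockCount, range_add_one, filter_insert, blockCount]
  split_ifs with h
  · rw [card_insert_of_notMem (by simp)]
  · rfl

variable {η}

lemma tIdx_eq {t i : ℕ} (ht : ∑ l ∈ range t, η.d l ≤ i) (ht' : i < ∑ l ∈ range (t + 1), η.d l) :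
    tIdx η (i + 1) = t := by
  refine le_antisymm (Nat.sInf_le ht') (le_csInf ⟨t, ht'⟩ fun s hs => ?_)
  by_contra! hst
  have := sum_le_sum_of_subset (f := η.d) (range_mono (show s + 1 ≤ t from hst))
  exact absurd (hs.trans (this.trans ht)) (by omega)

lemma tIdx_spec {T i : ℕ} (hi : i < ∑ l ∈ range T, η.d l) :
    ∑ l ∈ range (tIdx η (i + 1)), η.d l ≤ i ∧
      i < ∑ l ∈ range (tIdx η (i + 1) + 1), η.d l := by
  have hex : ∃ t, i < ∑ l ∈ range t, η.d l := ⟨T, hi⟩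
  classical
  rcases hfind : Nat.find hex with _ | t
  · simpa [hfind] using Nat.find_spec hex
  · have hlt := Nat.find_spec hex
    rw [hfind] at hlt
    have hle := not_lt.1 (Nat.find_min hex (m := t) (by omega))
    rw [tIdx_eq hle hlt]
    exact ⟨hle, hlt⟩

lemma blockCount_sum_add {s t c : ℕ} (hc : c ≤ η.d t) :
    blockCount η s (∑ i ∈ range t, η.d i + c) =
      blockCount η s (∑ i ∈ range t, η.d i) + if (Odd t ↔ Odd s) then c else 0 := by
  induction c with
  | zero => simp
  | succ c ih =>
    have ht : tIdx η (∑ i ∈ range t, η.d i + c + 1) = t :=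
      tIdx_eq (Nat.le_add_right _ c) (by rw [sum_range_succ]; omega)
    rw [← add_assoc, blockCount_succ, ih (by omega), ht]
    split_ifs <;> rfl

lemma blockCount_sum (t : ℕ) :
    blockCount η t (∑ i ∈ range t, η.d i) = sameParitySum η.d t ∧
      blockCount η (t + 1) (∑ i ∈ range t, η.d i) = otherParitySum η.d t := by
  induction t with
  | zero => exact ⟨rfl, rfl⟩
  | succ t ih =>
    have hper : blockCount η (t + 1 + 1) = blockCount η t :=
      blockCount_congr η (by simp [Nat.odd_add_one])
    rw [sum_range_succ, blockCount_sum_add le_rfl, blockCount_sum_add le_rfl, hper, ih.1, ih.2,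
      sameParitySum_succ, otherParitySum_succ]
    simp [odd_iff_odd_add_one]

lemma blockCount_eq {t j : ℕ} (hj : ∑ i ∈ range t, η.d i ≤ j)
    (hj' : j ≤ ∑ i ∈ range (t + 1), η.d i) :
    blockCount η t j = sameParitySum η.d t + (j - ∑ i ∈ range t, η.d i) ∧
      blockCount η (t + 1) j = otherParitySum η.d t := by
  obtain ⟨c, rfl⟩ := Nat.exists_eq_add_of_le hj
  rw [sum_range_succ] at hj'
  rw [blockCount_sum_add (by omega), blockCount_sum_add (by omega), (blockCount_sum t).1,
    (blockCount_sum t).2]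
  simp [odd_iff_odd_add_one]

lemma vvec_succ {T i : ℕ} (hi : i < ∑ l ∈ range T, η.d l) :
    vvec η (i + 1) = if (η.z = true ↔ Odd (tIdx η (i + 1)))
      then (blockCount η (tIdx η (i + 1)) (i + 1), 0)
      else (0, blockCount η (tIdx η (i + 1)) (i + 1)) := by
  obtain ⟨hle, hlt⟩ := tIdx_spec hi
  rw [(blockCount_eq (hle.trans i.le_succ) hlt).1]
  rfl

end Blocks

namespace MergePath

/-- One step of the listing from the counts `p`, a tie being resolved in favour of `k`. -/
def greedyStep (k K : ℕ) (p : ℕ × ℕ) : ℕ × ℕ :=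
  if k * (p.1 + 1) ≤ K * (p.2 + 1) then (p.1 + 1, p.2) else (p.1, p.2 + 1)

lemma exists_extending {k K n : ℕ} {a b : ℕ → ℕ} (ha : a 0 = 0) (hb : b 0 = 0)
    (h : ∀ j < n, (a (j + 1) = a j + 1 ∧ b (j + 1) = b j ∧ k * (a j + 1) ≤ K * (b j + 1)) ∨
      (a (j + 1) = a j ∧ b (j + 1) = b j + 1 ∧ K * (b j + 1) ≤ k * (a j + 1))) :
    ∃ P : MergePath k K, ∀ j ≤ n, P.a j = a j ∧ P.b j = b j := by
  let counts (j : ℕ) : ℕ × ℕ := (greedyStep k K)^[j - n] (a (min j n), b (min j n))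
  have counts_of_le : ∀ j ≤ n, counts j = (a j, b j) := fun j hj => by
    simp [counts, hj]
  have counts_succ : ∀ j, n ≤ j → counts (j + 1) = greedyStep k K (counts j) := fun j hj => by
    simp only [counts, min_eq_right hj, min_eq_right (hj.trans j.le_succ),
      Nat.succ_sub hj, Function.iterate_succ_apply']
  refine ⟨⟨fun j => (counts j).1, fun j => (counts j).2, ?_, ?_, fun j => ?_⟩, fun j hj => ?_⟩
  · simpa [counts_of_le]
  · simpa [counts_of_le]
  · rcases lt_or_ge j n with hj | hj
    · simpa only [counts_of_le j hj.le, counts_of_le (j + 1) hj] using h j hj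
    · rw [counts_succ j hj, greedyStep]
      split_ifs with hle
      · exact .inl ⟨rfl, rfl, hle⟩
      · exact .inr ⟨rfl, rfl, (not_le.1 hle).le⟩
  · simp [counts_of_le j hj]

end MergePath

theorem exists_mergePath_vvec_eq {η : OmegaData} {k K T : ℕ}
    (hodd : ∀ t, Odd t → 0 < η.d t →
      k * (sameParitySum η.d t + η.d t) ≤ K * (otherParitySum η.d t + 1))
    (heven : ∀ t, ¬Odd t → 0 < η.d t →
      K * (sameParitySum η.d t + η.d t) ≤ k * (otherParitySum η.d t + 1)) :
    ∃ P : MergePath k K, ∀ i < ∑ l ∈ range T, η.d l,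
      vvec η (i + 1) = if η.z then (P.x (i + 1), P.y (i + 1)) else (P.y (i + 1), P.x (i + 1)) := by
  have parity : ∀ t, (Odd t → blockCount η 1 = blockCount η t ∧
      blockCount η 0 = blockCount η (t + 1)) ∧ (¬Odd t → blockCount η 0 = blockCount η t ∧
      blockCount η 1 = blockCount η (t + 1)) := fun t => by
    refine ⟨fun ht => ⟨?_, ?_⟩, fun ht => ⟨?_, ?_⟩⟩ <;>
    exact blockCount_congr η (by simp [Nat.odd_add_one, ht])
  obtain ⟨P, hP⟩ := MergePath.exists_extending (k := k) (K := K) (n := ∑ l ∈ range T, η.d l)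
    (blockCount_zero η 1) (blockCount_zero η 0) fun j hj => by
      obtain ⟨hle, hlt⟩ := tIdx_spec hj
      obtain ⟨hown, hother⟩ := blockCount_eq hle hlt.le
      rw [sum_range_succ] at hlt
      simp only [blockCount_succ]
      by_cases ht : Odd (tIdx η (j + 1))
      · left
        rw [((parity _).1 ht).1, ((parity _).1 ht).2, hown, hother]
        exact ⟨by simp [ht], by simp [ht],
          (Nat.mul_le_mul_left _ (by omega)).trans (hodd _ ht (by omega))⟩
      · right
        rw [((parity _).2 ht).1, ((parity _).2 ht).2, hown, hother]
        exact ⟨by simp [ht], by simp [ht],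
          (Nat.mul_le_mul_left _ (by omega)).trans (heven _ ht (by omega))⟩
  refine ⟨P, fun i hi => ?_⟩
  have ha := blockCount_succ η 1 i
  have hb := blockCount_succ η 0 i
  rw [vvec_succ hi, MergePath.y, MergePath.x, MergePath.x, MergePath.swap_a, MergePath.swap_a,
    (hP i hi.le).1, (hP i hi.le).2, (hP (i + 1) hi).1, (hP (i + 1) hi).2]
  by_cases ht : Odd (tIdx η (i + 1))
  · rw [← ((parity _).1 ht).1]
    cases η.z <;> simp_all
  · rw [← ((parity _).2 ht).1]
    cases η.z <;> simp_all

/-! ### The recursion defining `η_k` -/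

lemma fk_one_zero (k : ℕ) : fk k (1, 0) = k := by simp [fk]

lemma fk_lastCol {n k : ℕ} (hk : k ≤ n) : fk k (n, n + 1) = (n + 1 - k : ℕ) := by
  rw [fk]
  push_cast [hk.trans n.le_succ]
  ring

lemma fk_smul (k w : ℕ) (v : ℕ × ℕ) : fk k (w * v.1, w * v.2) = w * fk k v := by
  simp only [fk]
  push_cast
  ring

lemma zk_eq_true_iff {n k : ℕ} (hk : k ≤ n) : zk n k = true ↔ k ≤ n + 1 - k := by
  rw [zk, decide_eq_true_iff, fk_one_zero, fk_lastCol hk, Nat.cast_le]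

lemma sSup_mul_le {p : ℕ} (hp : 0 < p) (q : ℕ) :
    sSup {m : ℕ | (m : ℤ) * (p : ℤ) ≤ (q : ℤ)} = q / p := by
  refine IsGreatest.csSup_eq ⟨?_, fun m hm => ?_⟩
  · exact_mod_cast Nat.div_mul_le_self q p
  · exact (Nat.le_div_iff_mul_le hp).2 (by exact_mod_cast hm)

/-- The value of `f_k` on the generator, `(1, 0)` or `(n, n + 1)`, whose multiples are listed in the
blocks of `η_k` with the parity of `t`: the smaller value belongs to the odd blocks. -/
def blockWeight (n k t : ℕ) : ℕ := if Odd t then min k (n + 1 - k) else max k (n + 1 - k)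

lemma blockWeight_pos {n k : ℕ} (hk : 1 ≤ k) (hkn : k ≤ n) (t : ℕ) : 0 < blockWeight n k t := by
  rw [blockWeight]
  split_ifs <;> omega

lemma blockWeight_add_two (n k t : ℕ) : blockWeight n k (t + 1 + 1) = blockWeight n k t := by
  simp [blockWeight, Nat.odd_add_one]

lemma tval_eq {n k : ℕ} (hk : 1 ≤ k) (hkn : k ≤ n) (t O E : ℕ) :
    tval n k t O E =
      blockWeight n k (t + 1) * ((if Odd t then E else O) + 1) / blockWeight n k t := by
  simp only [tval]
  generalize (if Odd t then E else O) + 1 = w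
  have hlast := fk_smul k w (n, n + 1)
  have hfirst := fk_smul k w (1, 0)
  rw [fk_lastCol hkn] at hlast
  rw [fk_one_zero, mul_one, mul_zero] at hfirst
  rw [hlast, hfirst, fk_lastCol hkn, fk_one_zero, ← Nat.cast_mul, ← Nat.cast_mul,
    sSup_mul_le (by omega), sSup_mul_le (by omega), mul_comm w, mul_comm w]
  simp only [blockWeight, Nat.odd_add_one, zk_eq_true_iff hkn]
  by_cases ht : Odd t <;> rcases le_or_gt k (n + 1 - k) with h | h
  · simp [ht, h]
  · simp [ht, h.le, h.not_ge]
  · simp [ht, h]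
  · simp [ht, h.le, h.not_ge]

lemma oeSums_succ (n k l : ℕ) : oeSums n k (l + 1) =
    if Odd (l + 1) then ((oeSums n k l).1 + dk n k (l + 1), (oeSums n k l).2)
    else ((oeSums n k l).1, (oeSums n k l).2 + dk n k (l + 1)) := rfl

lemma oeSums_eq (n k l : ℕ) : oeSums n k l = if Odd (l + 1)
    then (sameParitySum (dk n k) (l + 1), otherParitySum (dk n k) (l + 1))
    else (otherParitySum (dk n k) (l + 1), sameParitySum (dk n k) (l + 1)) := by
  induction l with
  | zero => simp [sameParitySum, otherParitySum, oeSums, dk]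
  | succ l ih =>
    rw [oeSums_succ, ih, sameParitySum_succ _ (l + 1), otherParitySum_succ _ (l + 1)]
    by_cases hl : Odd (l + 1) <;> simp [hl, Nat.odd_add_one (n := l + 1)]

section Recursion

variable {n k : ℕ} (hk : 1 ≤ k) (hkn : k ≤ n) (l : ℕ)

include hk hkn

lemma dk_succ : dk n k (l + 1) = if ∑ i ∈ range (l + 1), dk n k i < n
    then min (n - ∑ i ∈ range (l + 1), dk n k i)
      (blockWeight n k l * (otherParitySum (dk n k) (l + 1) + 1) / blockWeight n k (l + 1) -
        sameParitySum (dk n k) (l + 1))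
    else 0 := by
  rw [dk, tval_eq hk hkn, blockWeight_add_two, oeSums_eq, ← sameParitySum_add_otherParitySum]
  by_cases hl : Odd (l + 1) <;> simp [hl, add_comm]

lemma blockWeight_mul_le (hd : 0 < dk n k (l + 1)) :
    blockWeight n k (l + 1) * (sameParitySum (dk n k) (l + 1) + dk n k (l + 1)) ≤
      blockWeight n k l * (otherParitySum (dk n k) (l + 1) + 1) := by
  have hdk := dk_succ hk hkn l
  rw [mul_comm, ← Nat.le_div_iff_mul_le (blockWeight_pos hk hkn _)]
  split_ifs at hdk <;> omega

lemma sum_dk_le : ∑ i ∈ range (l + 1), dk n k i ≤ n := by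
  induction l with
  | zero => simp [dk]
  | succ l ih =>
    have hdk := dk_succ hk hkn l
    rw [sum_range_succ]
    split_ifs at hdk <;> omega

lemma blockWeight_mul_succ_le (hlt : ∑ i ∈ range (l + 1), dk n k i < n) :
    blockWeight n k (l + 1) * (sameParitySum (dk n k) (l + 1) + 1) ≤
      blockWeight n k l * (otherParitySum (dk n k) (l + 1) + 1) := by
  rcases l with _ | l
  · simp [sameParitySum, otherParitySum, dk, blockWeight]
  · have hdk := dk_succ hk hkn l
    rw [sum_range_succ] at hlt
    rw [sameParitySum_succ _ (l + 1), otherParitySum_succ _ (l + 1), blockWeight_add_two]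
    have hdiv : blockWeight n k l * (otherParitySum (dk n k) (l + 1) + 1) /
        blockWeight n k (l + 1) < sameParitySum (dk n k) (l + 1) + dk n k (l + 1) + 1 := by
      split_ifs at hdk <;> omega
    rw [Nat.div_lt_iff_lt_mul (blockWeight_pos hk hkn _), mul_comm _ (blockWeight _ _ _)] at hdiv
    exact hdiv.le

lemma dk_succ_pos (hlt : ∑ i ∈ range (l + 1), dk n k i < n) : 0 < dk n k (l + 1) := by
  have hle := blockWeight_mul_succ_le hk hkn l hlt
  rw [mul_comm, ← Nat.le_div_iff_mul_le (blockWeight_pos hk hkn _)] at hle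
  rw [dk_succ hk hkn, if_pos hlt]
  omega

lemma min_le_sum_dk : min l n ≤ ∑ i ∈ range (l + 1), dk n k i := by
  induction l with
  | zero => simp
  | succ l ih =>
    have hpos := dk_succ_pos hk hkn l
    rw [sum_range_succ]
    omega

lemma sum_dk : ∑ i ∈ range (n + 1), dk n k i = n :=
  (sum_dk_le hk hkn n).antisymm (by simpa using min_le_sum_dk hk hkn n)

theorem exists_mergePath_vvec_etak : ∃ P : MergePath k (n + 1 - k),
    ∀ i < n, vvec (etak n k) (i + 1) = (P.x (i + 1), P.y (i + 1)) := by
  have hle (t : ℕ) (hd : 0 < dk n k t) :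
      blockWeight n k t * (sameParitySum (dk n k) t + dk n k t) ≤
        blockWeight n k (t + 1) * (otherParitySum (dk n k) t + 1) := by
    rcases t with _ | l
    · exact absurd hd (lt_irrefl 0)
    · rw [blockWeight_add_two]
      exact blockWeight_mul_le hk hkn l hd
  have hpath := exists_mergePath_vvec_eq (η := etak n k) (T := n + 1)
    (k := min k (n + 1 - k)) (K := max k (n + 1 - k))
    (fun t ht hd => by simpa [etak, blockWeight, Nat.odd_add_one, ht] using hle t hd)
    (fun t ht hd => by simpa [etak, blockWeight, Nat.odd_add_one, ht] using hle t hd)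
  rw [show (etak n k).z = zk n k from rfl, show (etak n k).d = dk n k from rfl,
    sum_dk hk hkn] at hpath
  rcases le_or_gt k (n + 1 - k) with h | h
  · rw [min_eq_left h, max_eq_right h, (zk_eq_true_iff hkn).2 h] at hpath
    exact hpath
  · rw [min_eq_right h.le, max_eq_left h.le,
      Bool.eq_false_iff.2 (mt (zk_eq_true_iff hkn).1 h.not_ge)] at hpath
    obtain ⟨P, hP⟩ := hpath
    exact ⟨P.swap, hP⟩

end Recursion

/-! ### Minimality of `J_{η_k}` -/

lemma fk_Amap {n k : ℕ} (hk : k ≤ n) (β : ℕ × ℕ × ℕ) :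
    fk k (Amap n β) = indexWeight k (n + 1 - k) β := by
  simp only [fk, Amap, indexWeight]
  push_cast [hk.trans n.le_succ]
  ring

lemma fk_mJ {n k : ℕ} (hk : k ≤ n) (J : Finset (ℕ × ℕ × ℕ)) :
    fk k (mJ n J) = (∑ β ∈ J, indexWeight k (n + 1 - k) β : ℕ) := by
  simp only [Nat.cast_sum, ← fk_Amap hk, mJ, fk, Prod.fst_sum, Prod.snd_sum, mul_sum,
    sum_add_distrib]

lemma Amap_injOn (n : ℕ) : Set.InjOn (Amap n) {β | β.2.1 ≤ n} := by
  rintro ⟨x, q, y⟩ (hq : q ≤ n) ⟨x', q', y'⟩ (hq' : q' ≤ n) h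
  obtain ⟨hfst, hsnd⟩ := Prod.mk.inj h
  dsimp only at hfst hsnd
  have hmod : (q + (n + 1) * y) % (n + 1) = (q' + (n + 1) * y') % (n + 1) := congrArg (· % _) hsnd
  rw [Nat.add_mul_mod_self_left, Nat.add_mul_mod_self_left, Nat.mod_eq_of_lt (by omega),
    Nat.mod_eq_of_lt (by omega)] at hmod
  subst hmod
  obtain rfl : y = y' := Nat.eq_of_mul_eq_mul_left n.succ_pos (Nat.add_left_cancel hsnd)
  obtain rfl : x = x' := by omega
  rfl

namespace MergePath

variable {k K n : ℕ} (P : MergePath k K) {η : OmegaData}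

lemma exists_Amap_index_eq
    (hη : ∀ i < n, vvec η (i + 1) = (P.x (i + 1), P.y (i + 1))) {v : ℕ × ℕ}
    (hv : v ∈ Tset' n η) : ∃ α ∈ Lam2 n, Amap n (P.index α) = v := by
  simp only [Tset', Tj, mem_union, mem_biUnion, mem_image, mem_Icc, mem_range, if_true] at hv
  rcases hv with ⟨q, hq, rfl⟩ | ⟨i, ⟨hi, hin⟩, u, hu, rfl⟩
  · refine ⟨(0, q + 1), mem_Lam2.2 (by omega), ?_⟩
    simp [Amap, index, P.x_zero, P.y_zero]
  · obtain ⟨i, rfl⟩ := Nat.exists_eq_add_of_le' hi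
    rw [if_neg i.succ_ne_zero] at hu
    obtain ⟨p, hp, rfl⟩ := mem_image.1 hu
    rw [mem_range] at hp
    refine ⟨(i + 1, p), mem_Lam2.2 (by omega), ?_⟩
    rw [rshift, hη i hin, Amap, index, Prod.mk_add_mk, Prod.mk_add_mk]
    congr 1
    ring

lemma Jset_subset_image_index
    (hη : ∀ i < n, vvec η (i + 1) = (P.x (i + 1), P.y (i + 1))) :
    Jset n η ⊆ (Lam2 n).image P.index := by
  intro β hβ
  obtain ⟨hβ, hv⟩ := mem_filter.1 hβ
  obtain ⟨α, hα, hαβ⟩ := P.exists_Amap_index_eq hη hv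
  refine mem_image.2 ⟨α, hα, Amap_injOn n ?_ ?_ hαβ⟩
  · have := mem_Lam2.1 hα
    exact show α.2 ≤ n by omega
  · have := (mem_filter.1 hβ).2
    exact show β.2.1 ≤ n by omega

lemma sum_indexWeight_Jset_le
    (hη : ∀ i < n, vvec η (i + 1) = (P.x (i + 1), P.y (i + 1))) :
    ∑ β ∈ Jset n η, indexWeight k K β ≤ ∑ α ∈ Lam2 n, indexWeight k K (P.index α) :=
  (sum_le_sum_of_subset (P.Jset_subset_image_index hη)).trans
    (sum_image_le_of_nonneg fun _ _ => Nat.zero_le _)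

end MergePath

theorem stmt5 (n : ℕ) (hn : 1 ≤ n) (k : ℕ) (hk1 : 1 ≤ k) (hkn : k ≤ n) :
    ∀ J : Finset (ℕ × ℕ × ℕ), memSA n J →
      fk k (mJ n (Jset n (etak n k))) ≤ fk k (mJ n J) := by
  intro J hJ
  obtain ⟨P, hP⟩ := exists_mergePath_vvec_etak hk1 hkn
  rw [fk_mJ hkn, fk_mJ hkn, Nat.cast_le]
  calc ∑ β ∈ Jset n (etak n k), indexWeight k (n + 1 - k) β
      ≤ ∑ α ∈ Lam2 n, indexWeight k (n + 1 - k) (P.index α) := P.sum_indexWeight_Jset_le hP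
    _ ≤ ∑ β ∈ J, indexWeight k (n + 1 - k) β :=
      P.sum_indexWeight_le hk1 (by omega) (by omega) hJ
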